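/- Let j ≥ 1 and n ≥ j + 2 be integers, let m = ⌈(n−j)/2⌉, and define p̃(α) = d_{n−j−1}(α) − α·d_{m−1}(α)·d_{n−m−j−1}(α). Then p̃(1/√5) = ((1+φ)^{2m+j−n} + φ^{2m+j−n} − 2φ^{n−j}) / (√5)^{n−j−1}, where φ = (√5 − 1)/2. -/

import Mathlib

/-- `dpoly n α = ∑_{m=0}^{⌊n/2⌋} (-1)^m C(n-m, m) α^(2m)`. -/
noncomputable def dpoly (n : ℕ) (α : ℝ) : ℝ :=
  ∑ m ∈ Finset.range (n / 2 + 1), (-1 : ℝ) ^ m * (Nat.choose (n - m) m : ℝ) * α ^ (2 * m)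

/-- `φ = (√5 - 1)/2`. -/
noncomputable def phi : ℝ := (Real.sqrt 5 - 1) / 2

/-!
Write `d n` for `dpoly n α`. If `x + y = 1` and `x * y = α ^ 2`, the recurrence
`d (n + 2) = d (n + 1) - α ^ 2 * d n` gives Binet's formula
`(x - y) * d n = x ^ (n + 1) - y ^ (n + 1)`. Hence the powers `x ^ (a + b + 2)` cancel in
`(x - y) * d (a + b + 1) - (x - y) ^ 2 * d a * d b`. The point `α = 1 / √5` is the positive one at
which `x - y = α`; there `x = (1 + phi) / √5` and `y = phi / √5`, and `(1 + phi) * phi = 1`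
collapses the mixed products.
-/

theorem dpoly_eq_sum_range (n : ℕ) {K : ℕ} (hK : n / 2 < K) (α : ℝ) :
    dpoly n α = ∑ m ∈ Finset.range K, (-1 : ℝ) ^ m * ((n - m).choose m : ℝ) * α ^ (2 * m) := by
  refine Finset.sum_subset (Finset.range_subset_range.2 hK) fun m _ hm ↦ ?_
  rw [Finset.mem_range] at hm
  rw [Nat.choose_eq_zero_of_lt (by lia), Nat.cast_zero, mul_zero, zero_mul]

@[simp]
theorem dpoly_zero (α : ℝ) : dpoly 0 α = 1 := by simp [dpoly]

@[simp]
theorem dpoly_one (α : ℝ) : dpoly 1 α = 1 := by simp [dpoly]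

theorem dpoly_add_two (n : ℕ) (α : ℝ) :
    dpoly (n + 2) α = dpoly (n + 1) α - α ^ 2 * dpoly n α := by
  rw [dpoly_eq_sum_range (n + 2) (K := n + 2) (by lia),
    dpoly_eq_sum_range (n + 1) (K := n + 2) (by lia),
    dpoly_eq_sum_range n (K := n + 1) (by lia), Finset.sum_range_succ',
    Finset.sum_range_succ' _ (n + 1), Finset.mul_sum, add_sub_right_comm,
    ← Finset.sum_sub_distrib]
  congr 1
  refine Finset.sum_congr rfl fun i hi ↦ ?_
  have hi : i < n + 1 := Finset.mem_range.1 hi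
  have pascal : (n + 2 - (i + 1)).choose (i + 1) =
      (n - i).choose i + (n + 1 - (i + 1)).choose (i + 1) := by
    rw [show n + 2 - (i + 1) = n - i + 1 by lia, Nat.add_sub_add_right, Nat.choose_succ_succ']
  rw [pascal]
  push_cast
  ring

section Binet

variable {x y α : ℝ}

theorem sub_mul_dpoly (hadd : x + y = 1) (hmul : x * y = α ^ 2) (n : ℕ) :
    (x - y) * dpoly n α = x ^ (n + 1) - y ^ (n + 1) := by
  induction n using Nat.twoStepInduction with
  | zero => simp
  | one => rw [dpoly_one]; linear_combination (y - x) * hadd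
  | more n ih ih' =>
    calc (x - y) * dpoly (n + 2) α
        = (x + y) * ((x - y) * dpoly (n + 1) α) - x * y * ((x - y) * dpoly n α) := by
          rw [dpoly_add_two, hadd, hmul]; ring
      _ = x ^ (n + 3) - y ^ (n + 3) := by rw [ih, ih']; ring

theorem sub_mul_dpoly_sub_mul_dpoly (hadd : x + y = 1) (hmul : x * y = α ^ 2) (a b : ℕ) :
    (x - y) * (dpoly (a + b + 1) α - (x - y) * dpoly a α * dpoly b α) =
      x ^ (a + 1) * y ^ (b + 1) + x ^ (b + 1) * y ^ (a + 1) - 2 * y ^ (a + b + 2) :=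
  calc (x - y) * (dpoly (a + b + 1) α - (x - y) * dpoly a α * dpoly b α)
      = (x - y) * dpoly (a + b + 1) α - (x - y) * dpoly a α * ((x - y) * dpoly b α) := by ring
    _ = (x ^ (a + b + 2) - y ^ (a + b + 2)) -
          (x ^ (a + 1) - y ^ (a + 1)) * (x ^ (b + 1) - y ^ (b + 1)) := by
        simp only [sub_mul_dpoly hadd hmul]
    _ = x ^ (a + 1) * y ^ (b + 1) + x ^ (b + 1) * y ^ (a + 1) - 2 * y ^ (a + b + 2) := by ring

end Binet

theorem two_mul_phi_add_one : 2 * phi + 1 = √5 := by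
  unfold phi; ring

theorem one_add_phi_mul_phi : (1 + phi) * phi = 1 := by
  have h5 : √5 ^ 2 = 5 := Real.sq_sqrt (by norm_num)
  unfold phi
  linear_combination h5 / 4

theorem one_add_phi_pow_mul_phi_pow (k : ℕ) : (1 + phi) ^ k * phi ^ k = 1 := by
  rw [← mul_pow, one_add_phi_mul_phi, one_pow]

theorem dpoly_sub_mul_dpoly_one_div_sqrt_five (a b : ℕ) :
    dpoly (a + b + 1) (1 / √5) - 1 / √5 * dpoly a (1 / √5) * dpoly b (1 / √5) =
      ((1 + phi) ^ (a + 1) * phi ^ (b + 1) + (1 + phi) ^ (b + 1) * phi ^ (a + 1)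
        - 2 * phi ^ (a + b + 2)) / √5 ^ (a + b + 1) := by
  have h0 : √5 ≠ 0 := by positivity
  have hadd : (1 + phi) / √5 + phi / √5 = 1 := by
    rw [← add_div, div_eq_one_iff_eq h0, ← two_mul_phi_add_one]; ring
  have hmul : (1 + phi) / √5 * (phi / √5) = (1 / √5) ^ 2 := by
    rw [div_mul_div_comm, one_add_phi_mul_phi, div_pow, one_pow, sq]
  have hsub : (1 + phi) / √5 - phi / √5 = 1 / √5 := by
    rw [← sub_div, add_sub_cancel_right]
  have key := sub_mul_dpoly_sub_mul_dpoly hadd hmul a b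
  rw [hsub] at key
  refine mul_left_cancel₀ (one_div_ne_zero h0) (key.trans ?_)
  simp only [div_pow]
  field_simp
  ring

theorem stmt18_general (j n m : ℕ) (hmn : m + j < n) (hnm : n ≤ 2 * m + j) :
    dpoly (n - j - 1) (1 / Real.sqrt 5)
        - (1 / Real.sqrt 5) * dpoly (m - 1) (1 / Real.sqrt 5)
          * dpoly (n - m - j - 1) (1 / Real.sqrt 5)
      = ((1 + phi) ^ (2 * m + j - n) + phi ^ (2 * m + j - n) - 2 * phi ^ (n - j))
          / (Real.sqrt 5) ^ (n - j - 1) := by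
  obtain ⟨k, hk⟩ : ∃ k, n = m + j + k + 1 := Nat.exists_eq_add_of_lt hmn
  obtain ⟨r, rfl⟩ : ∃ r, m = k + r + 1 := ⟨m - k - 1, by lia⟩
  have hmixed : (1 + phi) ^ (k + r + 1) * phi ^ (k + 1) + (1 + phi) ^ (k + 1) * phi ^ (k + r + 1) =
      (1 + phi) ^ r + phi ^ r := by
    linear_combination ((1 + phi) ^ r + phi ^ r) * one_add_phi_pow_mul_phi_pow (k + 1)
  rw [show n - j - 1 = k + r + k + 1 by lia, show k + r + 1 - 1 = k + r by lia,
    show n - (k + r + 1) - j - 1 = k by lia, show 2 * (k + r + 1) + j - n = r by lia,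
    show n - j = k + r + k + 2 by lia, dpoly_sub_mul_dpoly_one_div_sqrt_five, hmixed]

theorem stmt18 (j n : ℕ) (hj : 1 ≤ j) (hn : j + 2 ≤ n)
    (m : ℕ) (hm : m = (n - j + 1) / 2) :
    dpoly (n - j - 1) (1 / Real.sqrt 5)
        - (1 / Real.sqrt 5) * dpoly (m - 1) (1 / Real.sqrt 5)
          * dpoly (n - m - j - 1) (1 / Real.sqrt 5)
      = ((1 + phi) ^ (2 * m + j - n) + phi ^ (2 * m + j - n) - 2 * phi ^ (n - j))
          / (Real.sqrt 5) ^ (n - j - 1) :=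
  stmt18_general j n m (by lia) (by lia)
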